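/- Let K be a field containing an element ζ with ζ⁴ = −1. Then the group ring K[P] contains a unit that is not a trivial unit. -/

import Mathlib

noncomputable section

/-- The two relators of the Promislow group `P = ⟨a, b | b⁻¹a²b = a⁻², a⁻¹b²a = b⁻²⟩`,
written as words that equal the identity: `b⁻¹a²ba²` and `a⁻¹b²ab²`. -/
def Prels : Set (FreeGroup (Fin 2)) :=
  {(FreeGroup.of 1)⁻¹ * (FreeGroup.of 0) ^ 2 * (FreeGroup.of 1) * (FreeGroup.of 0) ^ 2,
   (FreeGroup.of 0)⁻¹ * (FreeGroup.of 1) ^ 2 * (FreeGroup.of 0) * (FreeGroup.of 1) ^ 2}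

/-- The Promislow group. -/
abbrev P : Type := PresentedGroup Prels

def pa : P := PresentedGroup.of 0
def pb : P := PresentedGroup.of 1
def px : P := pa ^ 2
def py : P := pb ^ 2
def pz : P := (pa * pb) ^ 2

/-!
Inside `P` the squares `x = a²`, `y = b²`, `z = (ab)²` generate a copy of `ℤ³` with quotient the
Klein four-group. The group ring contains an element `m` supported on the cosets of `1` and `ab`,
and an element `n` supported on the cosets of `a` and `b`, such that `m` commutes with `z` and `n`,
while `n` inverts `z` and `n² = m (m + N)` with `N = 2 - z - z⁻¹`. Writing `A'` for the image of `A`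
under `z ↦ z⁻¹`, an element `A + B n` with `A` and `B` polynomials in `z`, `z⁻¹`, `m` is therefore a
unit as soon as its norm `A A' - B B' m (m + N)` is one. If `i² = -1`, then `z³⁰ + 1` has a divisor
of the form `g g'` (up to a power of `z`) with `g - g'` divisible by `N`, and this solves the
equation `norm = 1` explicitly. If `2` is nilpotent, then the norm of `1 + z m + z⁻¹ n` is
unipotent.

Neither unit is trivial: `P` acts through infinite dihedral quotients on pairs of power series by
monomial `2 × 2` matrices, and the units act by matrices with no zero in the first row.
-/

namespace Promislow

section Norm

variable {S R F : Type*} [CommRing S] [Ring R] [FunLike F S R] [RingHomClass F S R]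

theorem map_mul_mul_map_of_semiconjBy {f : F} {θ : S → S} {u : R}
    (hu : ∀ s, SemiconjBy u (f s) (f (θ s))) (p q : S) : f p * u * f q = f (p * θ q) * u := by
  rw [mul_assoc, (hu q).eq, ← mul_assoc, ← map_mul]

theorem map_mul_mul_map_mul_of_semiconjBy {f : F} {θ : S → S} {u v w : R} {t : S}
    (hu : ∀ s, SemiconjBy u (f s) (f (θ s))) (huv : u * v = f t * w) (p q : S) :
    f p * u * (f q * v) = f (p * θ q * t) * w := by
  rw [← mul_assoc, map_mul_mul_map_of_semiconjBy hu, mul_assoc, huv, ← mul_assoc, ← map_mul]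

theorem isUnit_add_mul_of_isUnit_norm {f : F} {σ : S → S} {n : R} {t p q : S}
    (hσ : Function.Involutive σ) (hn : ∀ s, SemiconjBy n (f s) (f (σ s))) (hsq : n * n = f t)
    (h : IsUnit (f (p * σ p - q * σ q * t))) : IsUnit (f p + f q * n) := by
  have move := map_mul_mul_map_of_semiconjBy hn
  have fold (r s : S) : f r * n * (f s * n) = f (r * σ s * t) := by
    rw [← mul_assoc, move, mul_assoc, hsq, ← map_mul]
  have norm_right : (f p + f q * n) * (f (σ p) - f q * n) = f (p * σ p - q * σ q * t) := by
    rw [add_mul, mul_sub, mul_sub, fold, move, hσ, ← mul_assoc, ← map_mul, ← map_mul,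
      mul_comm q p, map_sub]
    abel
  have norm_left : (f (σ p) - f q * n) * (f p + f q * n) = f (p * σ p - q * σ q * t) := by
    rw [sub_mul, mul_add, mul_add, fold, move, ← mul_assoc, ← map_mul, ← map_mul,
      mul_comm q (σ p), mul_comm (σ p) p, map_sub]
    abel
  exact isUnit_iff_exists_and_exists.2
    ⟨⟨_, by rw [← mul_assoc, norm_right, h.mul_val_inv]⟩,
      ⟨_, by rw [mul_assoc, norm_left, h.val_inv_mul]⟩⟩

end Norm

theorem semiconjBy_lift_mapDomainAlgHom {K A R : Type*} [CommRing K] [Monoid A] [Ring R]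
    [Algebra K R] {φ : A →* R} {θ : A →* A} {n : R}
    (h : ∀ v, SemiconjBy n (φ v) (φ (θ v))) (s : MonoidAlgebra K A) :
    SemiconjBy n (MonoidAlgebra.lift K R A φ s)
      (MonoidAlgebra.lift K R A φ (MonoidAlgebra.mapDomainAlgHom K K θ s)) := by
  induction s using MonoidAlgebra.induction_linear with
  | zero => simp
  | add s t hs ht => simpa only [map_add] using hs.add_right ht
  | single v c => simpa using (h v).smul_right c

/-- The element `N` in the relation `n² = m (m + N)` of a quadratic triple. -/
def defect {R : Type*} [Ring R] (z : Rˣ) : R := 2 - z - ↑z⁻¹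

/-- The relations between `z`, `m` and `n` from which all units below are built: `z` and `m`
commute, `n` inverts `z`, commutes with `m`, and is a square root of `m (m + 2 - z - z⁻¹)`. -/
structure IsQuadraticTriple {R : Type*} [Ring R] (z : Rˣ) (m n : R) : Prop where
  commute_unit : Commute m z
  inverts : SemiconjBy n (z : R) ↑z⁻¹
  commute : Commute n m
  sq : n * n = m * (m + defect z)

theorem IsQuadraticTriple.exists_model.{u, v} (K : Type u) {R : Type v} [CommRing K] [Ring R]
    [Algebra K R] {z : Rˣ} {m n : R} (h : IsQuadraticTriple z m n) :
    ∃ (S : Type u) (_ : CommRing S) (_ : Algebra K S) (f : S →ₐ[K] R) (σ : S →ₐ[K] S)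
      (w : Sˣ) (k : S), Function.Involutive σ ∧ (∀ s, SemiconjBy n (f s) (f (σ s))) ∧
      Units.map f w = z ∧ f k = m ∧ Units.map σ w = w⁻¹ ∧ σ k = k := by
  let φ : Multiplicative ℤ × Multiplicative ℕ →* R :=
    ((Units.coeHom R).comp (zpowersHom Rˣ z)).noncommCoprod (powersHom R m)
      fun i j => ((h.commute_unit.symm.units_zpow_left _).pow_right _)
  let θ : Multiplicative ℤ × Multiplicative ℕ →* Multiplicative ℤ × Multiplicative ℕ :=
    invMonoidHom.prodMap (MonoidHom.id _)
  have φ_apply (v) : φ v = ↑(z ^ v.1.toAdd) * m ^ v.2.toAdd := rfl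
  have hθ (v) : θ (θ v) = v := by simp [θ, Prod.map]
  have hφ (v) : SemiconjBy n (φ v) (φ (θ v)) := by
    have hz : SemiconjBy n (z : R) ↑(z⁻¹) := h.inverts
    simpa [φ_apply, θ, Prod.map] using
      (hz.units_zpow_right v.1.toAdd).mul_right (h.commute.pow_right v.2.toAdd)
  let of := MonoidAlgebra.of K (Multiplicative ℤ × Multiplicative ℕ)
  let w := (of.comp (MonoidHom.inl _ _)).toHomUnits
  refine ⟨MonoidAlgebra K (Multiplicative ℤ × Multiplicative ℕ), inferInstance, inferInstance,
    MonoidAlgebra.lift K R _ φ, MonoidAlgebra.mapDomainAlgHom K K θ, w (.ofAdd 1), of (1, .ofAdd 1),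
    fun s => ?_, semiconjBy_lift_mapDomainAlgHom hφ, ?_, ?_, ?_, ?_⟩
  · induction s using MonoidAlgebra.induction_linear with
    | zero => simp
    | add s t hs ht => simp only [map_add, hs, ht]
    | single v c => simp [hθ]
  · ext; simp [w, of, φ_apply]
  · simp [of, φ_apply]
  · rw [← map_inv]; ext; simp [w, of, θ, -map_inv]
  · simp [of, θ]

section Pell

variable {R : Type*} [Ring R]

/-- `g`: with `g' (z) = g (z⁻¹)`, the difference `g - g'` is `N r` and the product `g g'` is
`z⁻⁶ Φ₁₂ Φ₂₀`, a divisor of `z³⁰ + 1` in Laurent polynomials. -/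
def cubic (i : R) (z : Rˣ) : R := 1 + 2 * (z - ↑z⁻¹) ^ 2 - i * (z - ↑z⁻¹) ^ 3

/-- `r`, the quotient of `g - g'` by `N`. -/
def skew (i : R) (z : Rˣ) : R := 2 * i * (z - ↑z⁻¹) * (z + ↑z⁻¹ + 2)

/-- `q`, the cofactor of `g g'` in `z¹⁵ + z⁻¹⁵`. -/
def cofactor (z : Rˣ) : R :=
  (z + ↑z⁻¹) * (z ^ 8 + z ^ 6 - z ^ 2 - 1 - (↑z⁻¹ : R) ^ 2 + (↑z⁻¹ : R) ^ 6 + (↑z⁻¹ : R) ^ 8)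

/-- The coefficient `A` of a solution of the norm equation `A A' - B B' m (m + N) = 1`. -/
def pellA (i : R) (z : Rˣ) (m : R) : R :=
  1 - (↑z⁻¹ : R) ^ 15 * cofactor z * skew i z ^ 2 * (m * (m + defect z))

/-- The coefficient `B` of a solution of the norm equation `A A' - B B' m (m + N) = 1`. -/
def pellB (i : R) (z : Rˣ) (m : R) : R :=
  -((z : R) ^ 15 * cofactor z * skew i z * (cubic i z + skew i z * m))

variable {R' F : Type*} [Ring R'] [FunLike F R R'] [RingHomClass F R R'] (f : F) (i : R)
  (z : Rˣ) (m : R)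

theorem map_defect : f (defect z) = defect (Units.map (f : R →* R') z) := by
  simp [defect, map_ofNat]

theorem map_cubic : f (cubic i z) = cubic (f i) (Units.map (f : R →* R') z) := by
  simp [cubic, map_ofNat]

theorem map_skew : f (skew i z) = skew (f i) (Units.map (f : R →* R') z) := by
  simp [skew, map_ofNat]

theorem map_cofactor : f (cofactor z) = cofactor (Units.map (f : R →* R') z) := by
  simp [cofactor]

theorem map_pellA : f (pellA i z m) = pellA (f i) (Units.map (f : R →* R') z) (f m) := by
  simp [pellA, map_skew, map_defect, map_cofactor]

theorem map_pellB : f (pellB i z m) = pellB (f i) (Units.map (f : R →* R') z) (f m) := by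
  simp [pellB, map_skew, map_cubic, map_cofactor]

end Pell

section PellIdentity

variable {S : Type*} [CommRing S] {i : S} (z : Sˣ)

theorem defect_inv {R : Type*} [Ring R] (z : Rˣ) : defect z⁻¹ = defect z := by
  simp only [defect, inv_inv]; abel

theorem skew_inv (i : S) : skew i z⁻¹ = -skew i z := by
  simp only [skew, inv_inv]; ring

theorem cofactor_inv : cofactor z⁻¹ = cofactor z := by
  simp only [cofactor, inv_inv]; ring

theorem cubic_sub_cubic_inv (i : S) : cubic i z - cubic i z⁻¹ = defect z * skew i z := by
  simp only [cubic, skew, defect, inv_inv]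
  linear_combination 8 * i * (z - ↑z⁻¹) * z.mul_inv

theorem cubic_mul_cubic_inv (hi : i ^ 2 = -1) :
    cubic i z * cubic i z⁻¹ = ((z : S) ^ 2 - 1 + (↑z⁻¹ : S) ^ 2) *
      ((z : S) ^ 4 - (z : S) ^ 2 + 1 - (↑z⁻¹ : S) ^ 2 + (↑z⁻¹ : S) ^ 4) := by
  have hz := z.mul_inv
  simp only [cubic, inv_inv]
  grind

theorem cofactor_mul_cubic_mul_cubic_inv (hi : i ^ 2 = -1) :
    cofactor z * (cubic i z * cubic i z⁻¹) = (z : S) ^ 15 + (↑z⁻¹ : S) ^ 15 := by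
  have hz := z.mul_inv
  rw [cubic_mul_cubic_inv z hi, cofactor]
  grind

theorem pell_identity (hi : i ^ 2 = -1) (m : S) :
    pellA i z m * pellA i z⁻¹ m - pellB i z m * pellB i z⁻¹ m * (m * (m + defect z)) = 1 := by
  have hpow : (z : S) ^ 15 * (↑z⁻¹ : S) ^ 15 = 1 := by rw [← mul_pow, z.mul_inv, one_pow]
  have hsub := cubic_sub_cubic_inv z i
  have hmul := cofactor_mul_cubic_mul_cubic_inv z hi
  simp only [pellA, pellB, defect_inv, skew_inv, cofactor_inv, inv_inv]
  generalize cofactor z = q at *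
  generalize skew i z = r at *
  generalize cubic i z = g at *
  generalize cubic i z⁻¹ = g' at *
  generalize (z : S) ^ 15 = w at *
  generalize (↑z⁻¹ : S) ^ 15 = v at *
  generalize defect z = N at *
  linear_combination (-(w * v * q ^ 2 * r ^ 3 * m * (m * (m + N)))) * hsub +
    q * r ^ 2 * (m * (m + N)) * w * v * hmul + q * r ^ 2 * (m * (m + N)) * (w + v) * hpow

end PellIdentity

theorem IsQuadraticTriple.isUnit_pell {K R : Type*} [CommRing K] [Ring R] [Algebra K R] {i : K}
    {z : Rˣ} {m n : R} (h : IsQuadraticTriple z m n) (hi : i ^ 2 = -1) :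
    IsUnit (pellA (algebraMap K R i) z m + pellB (algebraMap K R i) z m * n) := by
  obtain ⟨S, _, _, f, σ, w, k, hσ, hn, rfl, rfl, hw, hk⟩ := h.exists_model K
  have hi' : algebraMap K S i ^ 2 = -1 := by rw [← map_pow, hi, map_neg, map_one]
  have hf := isUnit_add_mul_of_isUnit_norm (p := pellA (algebraMap K S i) w k)
    (q := pellB (algebraMap K S i) w k) (t := k * (k + defect w)) hσ hn
    (by rw [h.sq, map_mul, map_add, map_defect])
  simp only [map_pellA, map_pellB, AlgHom.commutes, hw, hk] at hf
  exact hf (by rw [pell_identity w hi', map_one]; exact isUnit_one)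

theorem IsQuadraticTriple.isUnit_of_isNilpotent_two {R : Type*} [Ring R] {z : Rˣ} {m n : R}
    (h : IsQuadraticTriple z m n) (h2 : IsNilpotent (2 : R)) :
    IsUnit (1 + z * m + ↑z⁻¹ * n) := by
  obtain ⟨S, _, _, f, σ, w, k, hσ, hn, rfl, rfl, hw, hk⟩ := h.exists_model ℤ
  have hf := isUnit_add_mul_of_isUnit_norm (p := 1 + w * k) (q := (↑w⁻¹ : S))
    (t := k * (k + defect w)) hσ hn
    (by rw [h.sq, map_mul, map_add, map_defect])
  have hσw : σ w = ↑w⁻¹ := congrArg Units.val hw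
  have hσw' : σ ↑w⁻¹ = w := by rw [← hσw, hσ]
  have norm : (1 + w * k) * σ (1 + w * k) - ↑w⁻¹ * σ ↑w⁻¹ * (k * (k + defect w)) =
      1 + 2 * ((w + ↑w⁻¹ - 1) * k) := by
    simp only [map_add, map_mul, map_one, hσw, hσw', hk, defect]
    linear_combination (k ^ 2 - k * (k + (2 - w - ↑w⁻¹))) * w.mul_inv
  have hnil : IsNilpotent (2 * f ((w + ↑w⁻¹ - 1) * k)) :=
    (Commute.ofNat_left 2 _).isNilpotent_mul_right h2
  simpa using hf (by
    rw [norm, map_add, map_one, map_mul, map_ofNat]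
    exact hnil.isUnit_one_add)

/-- Generators `a`, `b` of a quotient of the Promislow group: `b` inverts `a²` and `a` inverts
`b²`. -/
structure IsPromislowPair {G : Type*} [Group G] (a b : G) : Prop where
  inverts_sq_left : SemiconjBy b (a ^ 2) (a ^ 2)⁻¹
  inverts_sq_right : SemiconjBy a (b ^ 2) (b ^ 2)⁻¹

theorem commute_sq_of_semiconjBy_inv {G : Type*} [Group G] {g h : G} (H : SemiconjBy g h h⁻¹) :
    Commute (g ^ 2) h := by
  rw [pow_two, Commute]
  simpa using H.inv_right.mul_left H

/-- `ℤ³`, written multiplicatively. -/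
abbrev Lattice : Type := Multiplicative ℤ × Multiplicative ℤ × Multiplicative ℤ

/-- The action on `ℤ³` of conjugation by the first generator of a Promislow pair. -/
def flipLeft : Lattice →* Lattice :=
  (MonoidHom.id _).prodMap (invMonoidHom.prodMap invMonoidHom)

/-- The action on `ℤ³` of conjugation by the second generator of a Promislow pair. -/
def flipRight : Lattice →* Lattice :=
  invMonoidHom.prodMap ((MonoidHom.id _).prodMap invMonoidHom)

namespace IsPromislowPair

section Group

variable {G H : Type*} [Group G] [Group H] {a b : G}

theorem map (h : IsPromislowPair a b) (f : G →* H) : IsPromislowPair (f a) (f b) where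
  inverts_sq_left := by simpa using h.inverts_sq_left.map f
  inverts_sq_right := by simpa using h.inverts_sq_right.map f

theorem inverts_mul_sq_left (h : IsPromislowPair a b) :
    SemiconjBy a ((a * b) ^ 2) ((a * b) ^ 2)⁻¹ := by
  have hb : b * (a ^ 2) = (a ^ 2)⁻¹ * b := h.inverts_sq_left
  have ha : b ^ 2 * a = a * (b ^ 2)⁻¹ := by simpa using h.inverts_sq_right.inv_right.eq.symm
  rw [SemiconjBy, eq_inv_mul_iff_mul_eq]
  calc (a * b) ^ 2 * (a * (a * b) ^ 2) = a * b * a * (b * a ^ 2) * b * a * b := by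
        simp only [pow_two, mul_assoc]
    _ = a * b * a⁻¹ * (b ^ 2 * a) * b := by rw [hb]; simp [pow_two, mul_assoc]
    _ = a := by rw [ha]; group

theorem inverts_mul_sq_right (h : IsPromislowPair a b) :
    SemiconjBy b ((a * b) ^ 2) ((a * b) ^ 2)⁻¹ := by
  have ha : a * (b ^ 2) = (b ^ 2)⁻¹ * a := h.inverts_sq_right
  have hb : a ^ 2 * b = b * (a ^ 2)⁻¹ := by simpa using h.inverts_sq_left.inv_right.eq.symm
  rw [SemiconjBy, eq_inv_mul_iff_mul_eq]
  calc (a * b) ^ 2 * (b * (a * b) ^ 2) = a * b * (a * b ^ 2) * a * b * a * b := by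
        simp only [pow_two, mul_assoc]
    _ = a * b⁻¹ * (a ^ 2 * b) * a * b := by rw [ha]; simp [pow_two, mul_assoc]
    _ = b := by rw [hb]; group

theorem mul_comm_eq (h : IsPromislowPair a b) :
    b * a = (a ^ 2)⁻¹ * b ^ 2 * ((a * b) ^ 2)⁻¹ * (a * b) := by
  calc b * a = (b * a ^ 2) * a⁻¹ := by group
    _ = (a ^ 2)⁻¹ * b * a⁻¹ := by rw [h.inverts_sq_left.eq]
    _ = (a ^ 2)⁻¹ * b ^ 2 * ((a * b) ^ 2)⁻¹ * (a * b) := by simp [pow_two, mul_assoc]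

theorem commute_sq_sq (h : IsPromislowPair a b) : Commute (a ^ 2) (b ^ 2) :=
  commute_sq_of_semiconjBy_inv h.inverts_sq_right

theorem commute_sq_left_mul_sq (h : IsPromislowPair a b) : Commute (a ^ 2) ((a * b) ^ 2) :=
  commute_sq_of_semiconjBy_inv h.inverts_mul_sq_left

theorem commute_sq_right_mul_sq (h : IsPromislowPair a b) : Commute (b ^ 2) ((a * b) ^ 2) :=
  commute_sq_of_semiconjBy_inv h.inverts_mul_sq_right

/-- The homomorphism `ℤ³ → G` with image generated by `a²`, `b²` and `(ab)²`. -/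
def latticeHom (h : IsPromislowPair a b) : Lattice →* G :=
  (zpowersHom G (a ^ 2)).noncommCoprod
    ((zpowersHom G (b ^ 2)).noncommCoprod (zpowersHom G ((a * b) ^ 2))
      fun _ _ => h.commute_sq_right_mul_sq.zpow_zpow _ _)
    fun _ _ => (h.commute_sq_sq.zpow_zpow _ _).mul_right (h.commute_sq_left_mul_sq.zpow_zpow _ _)

theorem latticeHom_apply (h : IsPromislowPair a b) (v : Lattice) :
    h.latticeHom v = (a ^ 2) ^ v.1.toAdd *
      ((b ^ 2) ^ v.2.1.toAdd * ((a * b) ^ 2) ^ v.2.2.toAdd) := rfl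

theorem semiconjBy_latticeHom_left (h : IsPromislowPair a b) (v : Lattice) :
    SemiconjBy a (h.latticeHom v) (h.latticeHom (flipLeft v)) := by
  have hx : SemiconjBy a (a ^ 2) (a ^ 2) := (Commute.refl a).pow_right 2
  simpa [latticeHom_apply, flipLeft] using (hx.zpow_right v.1.toAdd).mul_right
    ((h.inverts_sq_right.zpow_right v.2.1.toAdd).mul_right
      (h.inverts_mul_sq_left.zpow_right v.2.2.toAdd))

theorem semiconjBy_latticeHom_right (h : IsPromislowPair a b) (v : Lattice) :
    SemiconjBy b (h.latticeHom v) (h.latticeHom (flipRight v)) := by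
  have hy : SemiconjBy b (b ^ 2) (b ^ 2) := (Commute.refl b).pow_right 2
  simpa [latticeHom_apply, flipRight] using (h.inverts_sq_left.zpow_right v.1.toAdd).mul_right
    ((hy.zpow_right v.2.1.toAdd).mul_right (h.inverts_mul_sq_right.zpow_right v.2.2.toAdd))

end Group

end IsPromislowPair

/-- A commutative ring `S` with automorphisms `α`, `β` and units `x`, `y`, `z` describing how
`a` and `b` multiply in `R`: the additive span of `f S`, `f S a`, `f S b`, `f S a b` is then the
image of a crossed product of `S` with the Klein four-group. -/
structure IsCrossedModel {S R : Type*} [CommRing S] [Ring R] (f : S →+* R) (α β : S →+* S)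
    (x y z : Sˣ) (a b : R) : Prop where
  semiconjBy_a (s : S) : SemiconjBy a (f s) (f (α s))
  semiconjBy_b (s : S) : SemiconjBy b (f s) (f (β s))
  a_mul_a : a * a = f x
  b_mul_b : b * b = f y
  b_mul_a : b * a = f (↑x⁻¹ * y * ↑z⁻¹) * (a * b)
  map_α_x : Units.map α x = x
  map_α_y : Units.map α y = y⁻¹
  map_α_z : Units.map α z = z⁻¹
  map_β_x : Units.map β x = x⁻¹
  map_β_y : Units.map β y = y
  map_β_z : Units.map β z = z⁻¹

theorem IsPromislowPair.exists_isCrossedModel {R : Type*} [Ring R] {a b : Rˣ}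
    (h : IsPromislowPair a b) :
    ∃ (S : Type) (_ : CommRing S) (f : S →+* R) (α β : S →+* S) (x y z : Sˣ),
      Units.map f x = a ^ 2 ∧ Units.map f y = b ^ 2 ∧ Units.map f z = (a * b) ^ 2 ∧
      IsCrossedModel f α β x y z (a : R) b := by
  let e := (MonoidAlgebra.of ℤ Lattice).toHomUnits
  let f := (MonoidAlgebra.lift ℤ R Lattice ((Units.coeHom R).comp h.latticeHom)).toRingHom
  let α := (MonoidAlgebra.mapDomainAlgHom ℤ ℤ flipLeft).toRingHom
  let β := (MonoidAlgebra.mapDomainAlgHom ℤ ℤ flipRight).toRingHom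
  have hf (v) : Units.map f (e v) = h.latticeHom v := by ext; simp [f, e]
  have hα (v) : Units.map α (e v) = e (flipLeft v) := by ext; simp [α, e]
  have hβ (v) : Units.map β (e v) = e (flipRight v) := by ext; simp [β, e]
  have hx : Units.map f (e (.ofAdd 1, 1, 1)) = a ^ 2 := by simp [hf, latticeHom_apply]
  have hy : Units.map f (e (1, .ofAdd 1, 1)) = b ^ 2 := by simp [hf, latticeHom_apply]
  have hz : Units.map f (e (1, 1, .ofAdd 1)) = (a * b) ^ 2 := by simp [hf, latticeHom_apply]
  refine ⟨MonoidAlgebra ℤ Lattice, inferInstance, f, α, β, _, _, _, hx, hy, hz, ?_⟩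
  constructor
  · refine semiconjBy_lift_mapDomainAlgHom fun v => ?_
    simpa using (h.semiconjBy_latticeHom_left v).map (Units.coeHom R)
  · refine semiconjBy_lift_mapDomainAlgHom fun v => ?_
    simpa using (h.semiconjBy_latticeHom_right v).map (Units.coeHom R)
  · simpa [pow_two] using congrArg Units.val hx.symm
  · simpa [pow_two] using congrArg Units.val hy.symm
  · have hba := h.mul_comm_eq
    rw [← hx, ← hy, ← hz] at hba
    simpa using congrArg Units.val hba
  · simp [hα, flipLeft]
  · simp [hα, flipLeft, ← map_inv]
  · simp [hα, flipLeft, ← map_inv]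
  · simp [hβ, flipRight, ← map_inv]
  · simp [hβ, flipRight]
  · simp [hβ, flipRight, ← map_inv]

namespace IsCrossedModel

variable {S R : Type*} [CommRing S] [Ring R] {f : S →+* R} {α β : S →+* S} {x y z : Sˣ} {a b : R}

/-- Element of the crossed product with coordinates `p`, `q`, `r`, `s` on `1`, `a`, `b`, `ab`. -/
def combo (f : S →+* R) (a b : R) (p q r s : S) : R :=
  f p + f q * a + f r * b + f s * (a * b)

theorem a_mul_ab (h : IsCrossedModel f α β x y z a b) : a * (a * b) = f x * b := by
  rw [← mul_assoc, h.a_mul_a]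

theorem ab_mul_b (h : IsCrossedModel f α β x y z a b) : a * b * b = f ↑y⁻¹ * a := by
  rw [mul_assoc, h.b_mul_b, (h.semiconjBy_a _).eq, ← h.map_α_y]; rfl

theorem ab_mul_a (h : IsCrossedModel f α β x y z a b) : a * b * a = f (↑y⁻¹ * z) * b := by
  have hα : α (↑x⁻¹ * y * ↑z⁻¹) * x = ↑y⁻¹ * z := by
    have hx : α ↑x⁻¹ = ↑x⁻¹ := by simpa using congrArg (fun u : Sˣ => (↑u⁻¹ : S)) h.map_α_x
    have hy : α y = ↑y⁻¹ := congrArg Units.val h.map_α_y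
    have hz : α ↑z⁻¹ = z := by simpa using congrArg (fun u : Sˣ => (↑u⁻¹ : S)) h.map_α_z
    rw [map_mul, map_mul, hx, hy, hz]
    linear_combination ↑y⁻¹ * z * x.mul_inv
  rw [mul_assoc, h.b_mul_a, ← mul_assoc, (h.semiconjBy_a _).eq, mul_assoc, h.a_mul_ab, ← mul_assoc,
    ← map_mul, hα]

theorem b_mul_ab (h : IsCrossedModel f α β x y z a b) :
    b * (a * b) = f (↑x⁻¹ * ↑z⁻¹) * a := by
  rw [← mul_assoc, h.b_mul_a, mul_assoc, h.ab_mul_b, ← mul_assoc, ← map_mul]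
  congr 2
  linear_combination ↑x⁻¹ * ↑z⁻¹ * y.mul_inv

theorem ab_mul_ab (h : IsCrossedModel f α β x y z a b) : a * b * (a * b) = f z := by
  rw [← mul_assoc, h.ab_mul_a, mul_assoc, h.b_mul_b, ← map_mul]
  congr 1
  linear_combination z * y.mul_inv

theorem semiconjBy_ab (h : IsCrossedModel f α β x y z a b) (s : S) :
    SemiconjBy (a * b) (f s) (f (α (β s))) :=
  (h.semiconjBy_a _).mul_left (h.semiconjBy_b _)

theorem combo_mul_combo (h : IsCrossedModel f α β x y z a b) (p₀ p₁ p₂ p₃ q₀ q₁ q₂ q₃ : S) :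
    combo f a b p₀ p₁ p₂ p₃ * combo f a b q₀ q₁ q₂ q₃ = combo f a b
      (p₀ * q₀ + p₁ * α q₁ * x + p₂ * β q₂ * y + p₃ * α (β q₃) * z)
      (p₀ * q₁ + p₁ * α q₀ + p₂ * β q₃ * (↑x⁻¹ * ↑z⁻¹) + p₃ * α (β q₂) * ↑y⁻¹)
      (p₀ * q₂ + p₁ * α q₃ * x + p₂ * β q₀ + p₃ * α (β q₁) * (↑y⁻¹ * z))
      (p₀ * q₃ + p₁ * α q₂ + p₂ * β q₁ * (↑x⁻¹ * y * ↑z⁻¹) + p₃ * α (β q₀)) := by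
  have scalar (u : R) (p q : S) : f p * (f q * u) = f (p * q) * u := by rw [← mul_assoc, map_mul]
  have aa : a * a = f x * 1 := by rw [h.a_mul_a, mul_one]
  have bb : b * b = f y * 1 := by rw [h.b_mul_b, mul_one]
  have abab : a * b * (a * b) = f z * 1 := by rw [h.ab_mul_ab, mul_one]
  have ab : a * b = f 1 * (a * b) := by rw [map_one, one_mul]
  have a_right := map_mul_mul_map_of_semiconjBy h.semiconjBy_a
  have b_right := map_mul_mul_map_of_semiconjBy h.semiconjBy_b
  have ab_right := map_mul_mul_map_of_semiconjBy h.semiconjBy_ab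
  have a_mul {v w : R} {t : S} := map_mul_mul_map_mul_of_semiconjBy (v := v) (w := w) (t := t)
    h.semiconjBy_a
  have b_mul {v w : R} {t : S} := map_mul_mul_map_mul_of_semiconjBy (v := v) (w := w) (t := t)
    h.semiconjBy_b
  have ab_mul {v w : R} {t : S} := map_mul_mul_map_mul_of_semiconjBy (v := v) (w := w) (t := t)
    h.semiconjBy_ab
  simp only [combo, add_mul, mul_add, scalar, ← map_mul f p₀, a_right, b_right, ab_right,
    a_mul aa, a_mul ab, a_mul h.a_mul_ab, b_mul bb, b_mul h.b_mul_a, b_mul h.b_mul_ab,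
    ab_mul h.ab_mul_a, ab_mul h.ab_mul_b, ab_mul abab, map_add, mul_one]
  abel

end IsCrossedModel

section PromislowElements

variable {R : Type*} [Ring R]

/-- The coefficient `E` of `ab` in the even element `m = E ab - X`. -/
def evenCoeff (x y z : Rˣ) : R := (1 + ↑x⁻¹) * (1 + ↑y⁻¹) * (1 + ↑z⁻¹)

/-- The scalar part `X` of the even element `m = E ab - X`. -/
def evenScalar (x y : Rˣ) : R := x + ↑x⁻¹ + y + ↑y⁻¹ + 4

/-- The coefficient `Q` of `a` in the odd element `n = Q a - R b`. -/
def oddCoeffLeft (x y z : Rˣ) : R :=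
  ↑z⁻¹ * (↑x⁻¹ * ↑y⁻¹ ^ 2 + 1) + (↑y⁻¹ + ↑x⁻¹ * ↑y⁻¹) * ↑z⁻¹ ^ 2 +
    2 * (↑x⁻¹ * ↑y⁻¹ + ↑y⁻¹) * ↑z⁻¹

/-- The coefficient `R` of `b` in the odd element `n = Q a - R b`. -/
def oddCoeffRight (x y z : Rˣ) : R :=
  ↑z⁻¹ * (↑x⁻¹ * ↑y⁻¹ + x) + (1 + ↑y⁻¹) + 2 * (↑y⁻¹ + 1) * ↑z⁻¹

/-- The even element `m` of a Promislow pair `a`, `b`. -/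
def evenElement (a b : Rˣ) : R :=
  evenCoeff (a ^ 2) (b ^ 2) ((a * b) ^ 2) * (a * b) - evenScalar (a ^ 2) (b ^ 2)

/-- The odd element `n` of a Promislow pair `a`, `b`. -/
def oddElement (a b : Rˣ) : R :=
  oddCoeffLeft (a ^ 2) (b ^ 2) ((a * b) ^ 2) * a -
    oddCoeffRight (a ^ 2) (b ^ 2) ((a * b) ^ 2) * b

variable {R' F : Type*} [Ring R'] [FunLike F R R'] [RingHomClass F R R'] (f : F) (x y z a b : Rˣ)

theorem map_evenCoeff : f (evenCoeff x y z) =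
    evenCoeff (Units.map (f : R →* R') x) (Units.map (f : R →* R') y)
      (Units.map (f : R →* R') z) := by
  simp [evenCoeff]

theorem map_evenScalar : f (evenScalar x y) =
    evenScalar (Units.map (f : R →* R') x) (Units.map (f : R →* R') y) := by
  simp [evenScalar, map_ofNat]

theorem map_oddCoeffLeft : f (oddCoeffLeft x y z) =
    oddCoeffLeft (Units.map (f : R →* R') x) (Units.map (f : R →* R') y)
      (Units.map (f : R →* R') z) := by
  simp [oddCoeffLeft, map_ofNat]

theorem map_oddCoeffRight : f (oddCoeffRight x y z) =
    oddCoeffRight (Units.map (f : R →* R') x) (Units.map (f : R →* R') y)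
      (Units.map (f : R →* R') z) := by
  simp [oddCoeffRight, map_ofNat]

theorem map_evenElement : f (evenElement a b) =
    evenElement (Units.map (f : R →* R') a) (Units.map (f : R →* R') b) := by
  simp [evenElement, map_evenCoeff, map_evenScalar]

theorem map_oddElement : f (oddElement a b) =
    oddElement (Units.map (f : R →* R') a) (Units.map (f : R →* R') b) := by
  simp [oddElement, map_oddCoeffLeft, map_oddCoeffRight]

end PromislowElements

section CrossedIdentities

variable {S : Type*} [CommRing S] (x y z : Sˣ)

theorem odd_even_left : oddCoeffLeft x y z * evenCoeff x y⁻¹ z⁻¹ * x =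
    evenCoeff x y z * oddCoeffLeft x⁻¹ y⁻¹ z * (↑y⁻¹ * z) := by
  have hx := x.mul_inv
  have hy := y.mul_inv
  have hz := z.mul_inv
  simp only [oddCoeffLeft, evenCoeff, inv_inv]
  grind

theorem odd_even_right : oddCoeffRight x y z * evenCoeff x⁻¹ y z⁻¹ * (↑x⁻¹ * ↑z⁻¹) =
    evenCoeff x y z * oddCoeffRight x⁻¹ y⁻¹ z * ↑y⁻¹ := by
  have hx := x.mul_inv
  have hy := y.mul_inv
  have hz := z.mul_inv
  simp only [oddCoeffRight, evenCoeff, inv_inv]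
  grind

theorem odd_odd_scalar :
    oddCoeffLeft x y z * oddCoeffLeft x y⁻¹ z⁻¹ * x +
      oddCoeffRight x y z * oddCoeffRight x⁻¹ y z⁻¹ * y =
    evenCoeff x y z * evenCoeff x⁻¹ y⁻¹ z * z + evenScalar x y * (evenScalar x y - defect z) := by
  have hx := x.mul_inv
  have hy := y.mul_inv
  have hz := z.mul_inv
  simp only [oddCoeffLeft, oddCoeffRight, evenCoeff, evenScalar, defect, inv_inv]
  grind

theorem odd_odd_mul :
    oddCoeffLeft x y z * oddCoeffRight x y⁻¹ z⁻¹ +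
      oddCoeffRight x y z * oddCoeffLeft x⁻¹ y z⁻¹ * (↑x⁻¹ * y * ↑z⁻¹) =
    evenCoeff x y z * (2 * evenScalar x y - defect z) := by
  have hx := x.mul_inv
  have hy := y.mul_inv
  have hz := z.mul_inv
  simp only [oddCoeffLeft, oddCoeffRight, evenCoeff, evenScalar, defect, inv_inv]
  grind

end CrossedIdentities

section EvenScalar

variable {R : Type*} [Ring R] (x y : Rˣ)

theorem evenScalar_inv_left : evenScalar x⁻¹ y = evenScalar x y := by
  simp only [evenScalar, inv_inv]; abel

theorem evenScalar_inv_right : evenScalar x y⁻¹ = evenScalar x y := by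
  simp only [evenScalar, inv_inv]; abel

end EvenScalar

namespace IsCrossedModel

variable {S R : Type*} [CommRing S] [Ring R] {f : S →+* R} {α β : S →+* S} {x y z : Sˣ} {a b : R}

theorem coe_eq_combo (s : S) : f s = combo f a b s 0 0 0 := by simp [combo]

theorem commute_even (h : IsCrossedModel f α β x y z a b) (p s : S) :
    Commute (combo f a b p 0 0 s) (f z) := by
  have hz : Units.map (α : S →* S) (Units.map (β : S →* S) z) = z := by
    rw [h.map_β_z, map_inv, h.map_α_z, inv_inv]
  have hz' : α (β z) = z := congrArg Units.val hz
  rw [coe_eq_combo (a := a) (b := b) (z : S), Commute, SemiconjBy, h.combo_mul_combo,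
    h.combo_mul_combo]
  simp [hz', mul_comm]

theorem semiconjBy_odd (h : IsCrossedModel f α β x y z a b) (q r : S) :
    SemiconjBy (combo f a b 0 q r 0) (f z) (f ↑z⁻¹) := by
  have hα : α z = ↑z⁻¹ := congrArg Units.val h.map_α_z
  have hβ : β z = ↑z⁻¹ := congrArg Units.val h.map_β_z
  rw [coe_eq_combo (a := a) (b := b) (z : S), coe_eq_combo (a := a) (b := b) (↑z⁻¹ : S),
    SemiconjBy, h.combo_mul_combo, h.combo_mul_combo]
  simp [hα, hβ, mul_comm]

theorem commute_odd_even (h : IsCrossedModel f α β x y z a b) :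
    Commute (combo f a b 0 (oddCoeffLeft x y z) (-oddCoeffRight x y z) 0)
      (combo f a b (-evenScalar x y) 0 0 (evenCoeff x y z)) := by
  have hl := odd_even_left x y z
  have hr := odd_even_right x y z
  rw [Commute, SemiconjBy, h.combo_mul_combo, h.combo_mul_combo]
  simp only [map_neg, map_zero, map_evenScalar, map_evenCoeff, map_oddCoeffLeft,
    map_oddCoeffRight, h.map_α_x, h.map_α_y, h.map_α_z, h.map_β_x, h.map_β_y, h.map_β_z, map_inv,
    inv_inv, evenScalar_inv_left, evenScalar_inv_right]
  congr 1
  · ring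
  · linear_combination -hr
  · linear_combination hl
  · ring

theorem odd_sq (h : IsCrossedModel f α β x y z a b) :
    combo f a b 0 (oddCoeffLeft x y z) (-oddCoeffRight x y z) 0 *
      combo f a b 0 (oddCoeffLeft x y z) (-oddCoeffRight x y z) 0 =
    combo f a b (-evenScalar x y) 0 0 (evenCoeff x y z) *
      combo f a b (-evenScalar x y + defect z) 0 0 (evenCoeff x y z) := by
  have hs := odd_odd_scalar x y z
  have hm := odd_odd_mul x y z
  rw [h.combo_mul_combo, h.combo_mul_combo]
  simp only [map_neg, map_zero, map_add, map_defect, map_evenScalar, map_evenCoeff,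
    map_oddCoeffLeft, map_oddCoeffRight, h.map_α_x, h.map_α_y, h.map_α_z, h.map_β_x, h.map_β_y,
    h.map_β_z, map_inv, inv_inv, evenScalar_inv_left, evenScalar_inv_right, defect_inv]
  congr 1
  · linear_combination hs
  · ring
  · ring
  · linear_combination -hm

end IsCrossedModel

open IsCrossedModel in
theorem IsPromislowPair.isQuadraticTriple {R : Type*} [Ring R] {a b : Rˣ}
    (h : IsPromislowPair a b) :
    IsQuadraticTriple ((a * b) ^ 2) (evenElement a b) (oddElement a b) := by
  obtain ⟨S, _, f, α, β, x, y, z, hx, hy, hz, hmod⟩ := h.exists_isCrossedModel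
  have even : evenElement a b = combo f (a : R) b (-evenScalar x y) 0 0 (evenCoeff x y z) := by
    simp [evenElement, ← hx, ← hy, ← hz, combo, map_evenCoeff, map_evenScalar,
      sub_eq_neg_add]
  have odd : oddElement a b =
      combo f (a : R) b 0 (oddCoeffLeft x y z) (-oddCoeffRight x y z) 0 := by
    simp [oddElement, ← hx, ← hy, ← hz, combo, map_oddCoeffLeft,
      map_oddCoeffRight, sub_eq_add_neg]
  have even_add : evenElement a b + defect ((a * b) ^ 2) =
      combo f (a : R) b (-evenScalar x y + defect z) 0 0 (evenCoeff x y z) := by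
    rw [even, ← hz, ← map_defect, combo, combo, map_add f]
    abel
  exact
    { commute_unit := by rw [even, ← hz]; exact hmod.commute_even _ _
      inverts := by rw [odd, ← hz, ← map_inv]; exact hmod.semiconjBy_odd _ _
      commute := by rw [odd, even]; exact hmod.commute_odd_even
      sq := by rw [even_add, odd, even]; exact hmod.odd_sq }

/-- The unit obtained from a Promislow pair when `i ^ 2 = -1`. -/
def pellUnit {R : Type*} [Ring R] (i : R) (a b : Rˣ) : R :=
  pellA i ((a * b) ^ 2) (evenElement a b) + pellB i ((a * b) ^ 2) (evenElement a b) * oddElement a b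

/-- The unit obtained from a Promislow pair when `2` is nilpotent. -/
def linearUnit {R : Type*} [Ring R] (a b : Rˣ) : R :=
  1 + ↑((a * b) ^ 2) * evenElement a b + ↑((a * b) ^ 2)⁻¹ * oddElement a b

theorem IsPromislowPair.isUnit_pellUnit {K R : Type*} [CommRing K] [Ring R] [Algebra K R] {i : K}
    {a b : Rˣ} (h : IsPromislowPair a b) (hi : i ^ 2 = -1) :
    IsUnit (pellUnit (algebraMap K R i) a b) :=
  h.isQuadraticTriple.isUnit_pell hi

theorem IsPromislowPair.isUnit_linearUnit {R : Type*} [Ring R] {a b : Rˣ}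
    (h : IsPromislowPair a b) (h2 : IsNilpotent (2 : R)) : IsUnit (linearUnit a b) :=
  h.isQuadraticTriple.isUnit_of_isNilpotent_two h2

section Map

variable {R R' F : Type*} [Ring R] [Ring R'] [FunLike F R R'] [RingHomClass F R R'] (f : F)
  (a b : Rˣ)

theorem map_pellUnit (i : R) : f (pellUnit i a b) =
    pellUnit (f i) (Units.map (f : R →* R') a) (Units.map (f : R →* R') b) := by
  simp [pellUnit, map_pellA, map_pellB, map_evenElement, map_oddElement]

theorem map_linearUnit : f (linearUnit a b) =
    linearUnit (Units.map (f : R →* R') a) (Units.map (f : R →* R') b) := by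
  simp [linearUnit, map_evenElement, map_oddElement]

end Map

section Involution

variable {G : Type*} [Group G] {d w : G}

theorem sq_reflection_mul (hw : w ^ 2 = 1) (hd : SemiconjBy w d d⁻¹) : (w * d) ^ 2 = 1 := by
  calc (w * d) ^ 2 = w * d * (w * d) := pow_two _
    _ = d⁻¹ * w * (w * d) := by rw [hd.eq]
    _ = 1 := by simp [← mul_assoc, mul_assoc _ w w, ← pow_two, hw]

theorem sq_rotation_mul (hw : w ^ 2 = 1) (hd : SemiconjBy w d d⁻¹) : (d * w) ^ 2 = 1 := by
  have hdw : d * w = w * d⁻¹ := by simpa using hd.inv_right.eq.symm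
  rw [hdw, sq_reflection_mul hw hd.inv_right]

end Involution

namespace IsPromislowPair

variable {G : Type*} [Group G] {a b d w : G}

theorem pa_pb : IsPromislowPair pa pb := by
  have conj_rel {u v : FreeGroup (Fin 2)} (h : u⁻¹ * v * u * v ∈ Prels) :
      SemiconjBy (PresentedGroup.mk Prels u) (PresentedGroup.mk Prels v)
        (PresentedGroup.mk Prels v)⁻¹ := by
    have hrel := PresentedGroup.one_of_mem h
    simp only [map_mul, map_inv] at hrel
    rw [mul_assoc, mul_assoc, inv_mul_eq_one] at hrel
    rw [SemiconjBy, eq_inv_mul_iff_mul_eq, ← hrel]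
  exact ⟨conj_rel (Or.inl rfl), conj_rel (Or.inr rfl)⟩

/-- The homomorphism from the Promislow group determined by a Promislow pair. -/
def lift (h : IsPromislowPair a b) : P →* G :=
  PresentedGroup.toGroup (f := ![a, b]) (by
    have rel {u v : G} (H : SemiconjBy u v v⁻¹) : u⁻¹ * v * u * v = 1 := by
      rw [mul_assoc _ u v, H.eq]; group
    rintro r (rfl | rfl)
    · simpa using rel h.inverts_sq_left
    · simpa using rel h.inverts_sq_right)

theorem lift_pa (h : IsPromislowPair a b) : h.lift pa = a := by simp [lift, pa]

theorem lift_pb (h : IsPromislowPair a b) : h.lift pb = b := by simp [lift, pb]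

theorem lift_mem (h : IsPromislowPair a b) {H : Subgroup G} (ha : a ∈ H) (hb : b ∈ H) (g : P) :
    h.lift g ∈ H := by
  have hle : Subgroup.closure (Set.range PresentedGroup.of) ≤ H.comap h.lift := by
    rw [Subgroup.closure_le]
    rintro _ ⟨j, rfl⟩
    fin_cases j
    · exact (congrArg (· ∈ H) h.lift_pa).mpr ha
    · exact (congrArg (· ∈ H) h.lift_pb).mpr hb
  exact hle (by rw [PresentedGroup.closure_range_of]; trivial)

theorem of_reflection_rotation (hw : w ^ 2 = 1) (hd : SemiconjBy w d d⁻¹) :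
    IsPromislowPair w (w * d) where
  inverts_sq_left := by simp [hw]
  inverts_sq_right := by simp [sq_reflection_mul hw hd]

theorem of_rotation_reflection (hw : w ^ 2 = 1) (hd : SemiconjBy w d d⁻¹) :
    IsPromislowPair d w where
  inverts_sq_left := by simpa using hd.pow_right 2
  inverts_sq_right := by simp [hw]

end IsPromislowPair

section Dihedral

variable {C R : Type*} [CommRing C] [Ring R] {j : C →+* R} {u : Cˣ} {d w : Rˣ}

theorem evenElement_reflection_rotation (hu : Units.map (j : C →* R) u = d) (hw : w ^ 2 = 1)
    (hd : SemiconjBy w d d⁻¹) :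
    evenElement w (w * d) = j (4 * (u + ↑u⁻¹ - 2)) := by
  have hz : w * (w * d) = d := by
    rw [← mul_assoc, ← pow_two, hw, one_mul]
  have poly : evenCoeff 1 1 (u ^ 2) * (u : C) - evenScalar 1 1 = 4 * (u + ↑u⁻¹ - 2) := by
    simp only [evenCoeff, evenScalar, inv_one, Units.val_one, ← inv_pow, Units.val_pow_eq_pow_val]
    linear_combination 4 * ↑u⁻¹ * u.mul_inv
  rw [← poly, map_sub, map_mul, map_evenCoeff, map_evenScalar, evenElement,
    sq_reflection_mul hw hd, hw, ← Units.val_mul, hz]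
  simp [← hu]

theorem oddElement_reflection_rotation (hu : Units.map (j : C →* R) u = d) (hw : w ^ 2 = 1)
    (hd : SemiconjBy w d d⁻¹) :
    oddElement w (w * d) = j (-2 * ↑u⁻¹ ^ 4 * (u - 1) ^ 3) * w := by
  have hww : w * w = 1 := by rw [← pow_two, hw]
  have poly : oddCoeffLeft 1 1 (u ^ 2) - oddCoeffRight 1 1 (u ^ 2) * (↑u⁻¹ : C) =
      -2 * ↑u⁻¹ ^ 4 * (u - 1) ^ 3 := by
    have hinv := u.mul_inv
    simp only [oddCoeffLeft, oddCoeffRight, inv_one, Units.val_one, ← inv_pow,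
      Units.val_pow_eq_pow_val]
    grind
  rw [← poly, map_sub, map_mul, map_oddCoeffLeft, map_oddCoeffRight, oddElement,
    sq_reflection_mul hw hd, hw, ← mul_assoc, hww, one_mul, hd.eq, Units.val_mul, sub_mul,
    ← mul_assoc]
  simp [← hu]

theorem evenElement_rotation_reflection (hu : Units.map (j : C →* R) u = d) (hw : w ^ 2 = 1)
    (hd : SemiconjBy w d d⁻¹) :
    evenElement d w = j (4 * (u + ↑u⁻¹)) * w - j (u ^ 2 + ↑u⁻¹ ^ 2 + 6) := by
  have coeff : evenCoeff (u ^ 2) 1 1 * (u : C) = 4 * (u + ↑u⁻¹) := by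
    simp only [evenCoeff, inv_one, Units.val_one, ← inv_pow, Units.val_pow_eq_pow_val]
    linear_combination 4 * ↑u⁻¹ * u.mul_inv
  have scalar : evenScalar (u ^ 2) 1 = (u : C) ^ 2 + ↑u⁻¹ ^ 2 + 6 := by
    simp only [evenScalar, inv_one, Units.val_one, ← inv_pow, Units.val_pow_eq_pow_val]
    ring
  rw [← coeff, ← scalar, map_mul, map_evenCoeff, map_evenScalar, evenElement,
    sq_rotation_mul hw hd, hw, ← mul_assoc]
  simp [← hu]

theorem oddElement_rotation_reflection (hu : Units.map (j : C →* R) u = d) (hw : w ^ 2 = 1)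
    (hd : SemiconjBy w d d⁻¹) :
    oddElement d w = j (4 * (u + ↑u⁻¹)) - j (u ^ 2 + ↑u⁻¹ ^ 2 + 6) * w := by
  have coeffLeft : oddCoeffLeft (u ^ 2) 1 1 * (u : C) = 4 * (u + ↑u⁻¹) := by
    simp only [oddCoeffLeft, inv_one, Units.val_one, ← inv_pow, Units.val_pow_eq_pow_val]
    linear_combination 4 * ↑u⁻¹ * u.mul_inv
  have coeffRight : oddCoeffRight (u ^ 2) 1 1 = (u : C) ^ 2 + ↑u⁻¹ ^ 2 + 6 := by
    simp only [oddCoeffRight, inv_one, Units.val_one, ← inv_pow, Units.val_pow_eq_pow_val]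
    ring
  rw [← coeffLeft, ← coeffRight, map_mul, map_oddCoeffLeft, map_oddCoeffRight, oddElement,
    sq_rotation_mul hw hd, hw]
  simp [← hu]

theorem linearUnit_rotation_reflection (hu : Units.map (j : C →* R) u = d) (hw : w ^ 2 = 1)
    (hd : SemiconjBy w d d⁻¹) :
    linearUnit d w =
      j (1 - ↑u⁻¹ ^ 2 * (u - 1) ^ 4) + j (-(↑u⁻¹ ^ 2 * (u - 1) ^ 4)) * w := by
  have poly : (4 * (u + ↑u⁻¹) : C) - (u ^ 2 + ↑u⁻¹ ^ 2 + 6) = -(↑u⁻¹ ^ 2 * (u - 1) ^ 4) := by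
    have hinv := u.mul_inv
    grind
  rw [linearUnit, sq_rotation_mul hw hd, evenElement_rotation_reflection hu hw hd,
    oddElement_rotation_reflection hu hw hd, sub_eq_add_neg 1, ← poly]
  simp only [map_add, map_sub, map_one, inv_one, Units.val_one]
  noncomm_ring

theorem pellUnit_reflection_rotation (hu : Units.map (j : C →* R) u = d) (hw : w ^ 2 = 1)
    (hd : SemiconjBy w d d⁻¹) (i : C) :
    pellUnit (j i) w (w * d) =
      j (pellA i (u ^ 2) (4 * (u + ↑u⁻¹ - 2))) +
      j (pellB i (u ^ 2) (4 * (u + ↑u⁻¹ - 2)) * (-2 * ↑u⁻¹ ^ 4 * (u - 1) ^ 3)) * w := by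
  have hz : (w * (w * d)) ^ 2 = Units.map (j : C →* R) (u ^ 2) := by
    rw [← mul_assoc, ← pow_two, hw, one_mul, map_pow, hu]
  rw [pellUnit, hz, evenElement_reflection_rotation hu hw hd,
    oddElement_reflection_rotation hu hw hd, ← map_pellA, ← map_pellB, ← mul_assoc, ← map_mul]

end Dihedral

section Monomial

variable (T : Type*) [CommRing T]

/-- The monomial `2 × 2` matrices, including those with zero entries on the support. -/
def monomialSubmonoid : Submonoid (Matrix (Fin 2) (Fin 2) T) where
  carrier := {M | (M 0 1 = 0 ∧ M 1 0 = 0) ∨ (M 0 0 = 0 ∧ M 1 1 = 0)}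
  one_mem' := by simp
  mul_mem' := by
    rintro M N (⟨h₁, h₂⟩ | ⟨h₁, h₂⟩) (⟨h₃, h₄⟩ | ⟨h₃, h₄⟩) <;>
      simp [Matrix.mul_apply, h₁, h₂, h₃, h₄]

/-- The transposition matrix. -/
def swapUnit : (Matrix (Fin 2) (Fin 2) T)ˣ where
  val := !![0, 1; 1, 0]
  inv := !![0, 1; 1, 0]
  val_inv := by simp [Matrix.one_fin_two]
  inv_val := by simp [Matrix.one_fin_two]

variable {T}

/-- The unit `(s, s⁻¹)` of `T × T`. -/
def torusUnit (s : Tˣ) : (Fin 2 → T)ˣ := MulEquiv.piUnits.symm ![s, s⁻¹]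

/-- The diagonal matrix with entries `s` and `s⁻¹`. -/
abbrev torusMatrix (s : Tˣ) : (Matrix (Fin 2) (Fin 2) T)ˣ :=
  Units.map (Matrix.diagonalRingHom (Fin 2) T : (Fin 2 → T) →* _) (torusUnit s)

theorem swapUnit_sq : swapUnit T ^ 2 = 1 := by
  ext : 1
  simp [swapUnit, pow_two, Matrix.one_fin_two]

theorem semiconjBy_swapUnit (s : Tˣ) :
    SemiconjBy (swapUnit T) (torusMatrix s) (torusMatrix s)⁻¹ := by
  rw [SemiconjBy, ← map_inv]
  ext k l
  fin_cases k <;> fin_cases l <;>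
    simp [swapUnit, torusUnit, Matrix.mul_apply, -map_inv]

theorem swapUnit_mem_units : swapUnit T ∈ (monomialSubmonoid T).units :=
  (Submonoid.mem_units_iff _ _).mpr ⟨.inr ⟨rfl, rfl⟩, .inr ⟨rfl, rfl⟩⟩

theorem torusMatrix_mem_units (s : Tˣ) : torusMatrix s ∈ (monomialSubmonoid T).units := by
  rw [Submonoid.mem_units_iff, ← map_inv]
  exact ⟨.inl (by simp), .inl (by simp [-map_inv])⟩

theorem map_eval_torusUnit (s : Tˣ) :
    Units.map (Pi.evalRingHom (fun _ : Fin 2 => T) 0 : (Fin 2 → T) →* T) (torusUnit s) = s := rfl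

theorem diagonal_add_diagonal_mul_swapUnit_apply (v v' : Fin 2 → T) (k : Fin 2) :
    (Matrix.diagonalRingHom (Fin 2) T v + Matrix.diagonalRingHom (Fin 2) T v' * swapUnit T) 0 k =
      ![Pi.evalRingHom (fun _ => T) 0 v, Pi.evalRingHom (fun _ => T) 0 v'] k := by
  fin_cases k <;> simp [swapUnit, Matrix.mul_apply]

end Monomial

/-- The embedding of `P` into the unit group of `K[P]`. -/
def ofUnit (K : Type*) [CommRing K] : P →* (MonoidAlgebra K P)ˣ := (MonoidAlgebra.of K P).toHomUnits

namespace IsPromislowPair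

section AlgHom

variable (K : Type*) {R : Type*} [CommRing K] [Ring R] [Algebra K R] {a b : Rˣ}

/-- The algebra homomorphism from `K[P]` determined by a Promislow pair of units. -/
def algHom (h : IsPromislowPair a b) : MonoidAlgebra K P →ₐ[K] R :=
  MonoidAlgebra.lift K R P ((Units.coeHom R).comp h.lift)

theorem map_algHom_ofUnit (h : IsPromislowPair a b) (g : P) :
    Units.map (h.algHom K : MonoidAlgebra K P →* R) (ofUnit K g) = h.lift g := by
  ext; simp [algHom, ofUnit]

end AlgHom

variable {K T : Type*} [CommRing K] [CommRing T] [Algebra K T]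
  {A B : (Matrix (Fin 2) (Fin 2) T)ˣ}

/-- A trivial unit acts by a multiple of a monomial matrix, whose first row has a zero entry. -/
theorem ne_single (h : IsPromislowPair A B) (hA : A ∈ (monomialSubmonoid T).units)
    (hB : B ∈ (monomialSubmonoid T).units) {u : MonoidAlgebra K P}
    (hu : ∀ k, h.algHom K u 0 k ≠ 0) (g : P) (c : K) : u ≠ MonoidAlgebra.single g c := by
  rintro rfl
  simp only [algHom, MonoidAlgebra.lift_single, Matrix.smul_apply] at hu
  rcases ((Submonoid.mem_units_iff _ _).mp (h.lift_mem hA hB g)).1 with ⟨hzero, -⟩ | ⟨hzero, -⟩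
  · exact hu 1 (by simp [hzero])
  · exact hu 0 (by simp [hzero])

end IsPromislowPair

section Nonvanishing

variable {T L : Type*} [CommRing T] [CommRing L] (ε : T →+* L) {s : Tˣ}

theorem pellA_ne_zero [Nontrivial L] (hε : Units.map (ε : T →* L) s = 1) (i : T) :
    pellA i (s ^ 2) (4 * (s + ↑s⁻¹ - 2)) ≠ 0 := by
  have hs : ε s = 1 := congrArg Units.val hε
  have hs' : ε ↑s⁻¹ = 1 := congrArg Units.inv hε
  refine ne_zero_of_map (f := ε) ?_
  rw [map_pellA]
  simp only [map_mul, map_add, map_sub, map_ofNat, hs, hs']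
  norm_num [pellA]

theorem skew_ne_zero [IsDomain T] [IsDomain L] (hε : Units.map (ε : T →* L) s = 1)
    (h2 : (2 : L) ≠ 0) (hs1 : (s : T) ≠ 1) {i : T} (hi : i ≠ 0) : skew i (s ^ 2) ≠ 0 := by
  have hs : ε s = 1 := congrArg Units.val hε
  have hs' : ε ↑s⁻¹ = 1 := congrArg Units.inv hε
  have h2T : (2 : T) ≠ 0 := ne_zero_of_map (f := ε) (by rwa [map_ofNat])
  have hadd : (s : T) + 1 ≠ 0 := ne_zero_of_map (f := ε) (by
    rwa [map_add, hs, map_one, one_add_one_eq_two])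
  have hadd_sq : (s : T) ^ 2 + 1 ≠ 0 := ne_zero_of_map (f := ε) (by
    rwa [map_add, map_pow, hs, map_one, one_pow, one_add_one_eq_two])
  have htrace : ((s ^ 2 : Tˣ) : T) + ↑(s ^ 2)⁻¹ + 2 ≠ 0 := ne_zero_of_map (f := ε) (by
    simpa [← inv_pow, hs, hs', map_ofNat, show (1 + 1 + 2 : L) = 2 * 2 by norm_num] using h2)
  have factor : ((s ^ 2 : Tˣ) : T) - ↑(s ^ 2)⁻¹ = ↑s⁻¹ ^ 2 * (s - 1) * (s + 1) * (s ^ 2 + 1) := by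
    have hinv := s.mul_inv
    simp only [← inv_pow, Units.val_pow_eq_pow_val]
    grind
  rw [skew, factor]
  exact mul_ne_zero (mul_ne_zero (mul_ne_zero h2T hi)
    (by simp [sub_ne_zero.mpr hs1, hadd, hadd_sq])) htrace

theorem pellB_ne_zero [IsDomain T] [IsDomain L] (hε : Units.map (ε : T →* L) s = 1)
    (h2 : (2 : L) ≠ 0) (hs1 : (s : T) ≠ 1) {i : T} (hi : i ≠ 0) :
    pellB i (s ^ 2) (4 * (s + ↑s⁻¹ - 2)) ≠ 0 := by
  have hs : ε s = 1 := congrArg Units.val hε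
  have hs' : ε ↑s⁻¹ = 1 := congrArg Units.inv hε
  have hcofactor : cofactor (s ^ 2) ≠ 0 := ne_zero_of_map (f := ε) (by
    rw [map_cofactor, map_pow, hε]
    norm_num [cofactor, h2])
  have hcubic : cubic i (s ^ 2) + skew i (s ^ 2) * (4 * (s + ↑s⁻¹ - 2)) ≠ 0 :=
    ne_zero_of_map (f := ε) (by
      simp only [map_add, map_mul, map_sub, map_ofNat, map_cubic, map_pow, hε, hs, hs']
      norm_num [cubic])
  rw [pellB]
  simp [hcofactor, hcubic, skew_ne_zero ε hε h2 hs1 hi]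

theorem pellUnit_apply_ne_zero [IsDomain T] [IsDomain L] {K : Type*} [CommRing K] [Algebra K T]
    (hε : Units.map (ε : T →* L) s = 1) (h2 : (2 : L) ≠ 0) (hs1 : (s : T) ≠ 1) {i : K}
    (hi : algebraMap K T i ≠ 0) (k : Fin 2) :
    pellUnit (algebraMap K _ i) (swapUnit T) (swapUnit T * torusMatrix s) 0 k ≠ 0 := by
  let eval := Pi.evalRingHom (fun _ : Fin 2 => T) 0
  have h2T : (2 : T) ≠ 0 := ne_zero_of_map (f := ε) (by rwa [map_ofNat])
  have hi_diagonal : algebraMap K (Matrix (Fin 2) (Fin 2) T) i =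
      Matrix.diagonalRingHom (Fin 2) T (algebraMap K _ i) := rfl
  have hi_eval : eval (algebraMap K _ i) = algebraMap K T i := rfl
  have even_eval : eval (4 * (torusUnit s + ↑(torusUnit s)⁻¹ - 2)) = 4 * (s + ↑s⁻¹ - 2) := rfl
  have odd_eval : eval (-2 * ↑(torusUnit s)⁻¹ ^ 4 * (torusUnit s - 1) ^ 3) =
      -2 * ↑s⁻¹ ^ 4 * (s - 1) ^ 3 := rfl
  rw [hi_diagonal, pellUnit_reflection_rotation rfl swapUnit_sq (semiconjBy_swapUnit s),
    diagonal_add_diagonal_mul_swapUnit_apply, map_mul, map_pellA, map_pellB, map_pow,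
    map_eval_torusUnit, hi_eval, even_eval, odd_eval]
  fin_cases k
  · exact pellA_ne_zero ε hε _
  · exact mul_ne_zero (pellB_ne_zero ε hε h2 hs1 hi) (by simp [h2T, sub_ne_zero.mpr hs1])

theorem linearUnit_apply_ne_zero [Nontrivial L] (hε : Units.map (ε : T →* L) s = 1)
    (hs : ((s : T) - 1) ^ 4 ≠ 0) (k : Fin 2) :
    linearUnit (torusMatrix s) (swapUnit T) 0 k ≠ 0 := by
  have hεs : ε s = 1 := congrArg Units.val hε
  rw [linearUnit_rotation_reflection rfl swapUnit_sq (semiconjBy_swapUnit s),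
    diagonal_add_diagonal_mul_swapUnit_apply]
  fin_cases k
  · exact ne_zero_of_map (f := ε) (by simp [torusUnit, hεs])
  · have hunit : IsUnit ((↑s⁻¹ : T) ^ 2) := s⁻¹.isUnit.pow 2
    simpa [torusUnit, hunit.mul_right_eq_zero] using hs

end Nonvanishing

section PowerSeries

open PowerSeries

theorem exists_unit_eq_one_add_X (L : Type*) [CommRing L] : ∃ s : L⟦X⟧ˣ, (s : L⟦X⟧) = 1 + X :=
  isUnit_iff_constantCoeff.mpr (by simp)

variable {K : Type*} [CommRing K]

theorem pellUnit_ne_single {i : K} (hi : i ^ 2 = -1) {J : Ideal K} [J.IsPrime]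
    (h2 : (2 : K) ∉ J) (g : P) (c : K) :
    pellUnit (algebraMap K (MonoidAlgebra K P) i) (ofUnit K pa) (ofUnit K pb) ≠
      MonoidAlgebra.single g c := by
  obtain ⟨s, hs⟩ := exists_unit_eq_one_add_X (K ⧸ J)
  have hs1 : (s : (K ⧸ J)⟦X⟧) ≠ 1 := by simp [hs, X_ne_zero]
  have hε : Units.map ((constantCoeff (R := K ⧸ J)) : (K ⧸ J)⟦X⟧ →* K ⧸ J) s = 1 :=
    Units.ext (by simp [hs])
  have h2J : (2 : K ⧸ J) ≠ 0 := fun h => h2 (Ideal.Quotient.eq_zero_iff_mem.mp (by rwa [map_ofNat]))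
  have hi0 : algebraMap K (K ⧸ J)⟦X⟧ i ≠ 0 := by
    intro h
    have hsq := congrArg (· ^ 2) h
    simp [← map_pow, hi] at hsq
  have pair := IsPromislowPair.of_reflection_rotation swapUnit_sq (semiconjBy_swapUnit s)
  refine pair.ne_single swapUnit_mem_units
    (mul_mem swapUnit_mem_units (torusMatrix_mem_units s)) (fun k => ?_) g c
  rw [map_pellUnit, pair.map_algHom_ofUnit K, pair.map_algHom_ofUnit K,
    pair.lift_pa, pair.lift_pb, AlgHom.commutes]
  exact pellUnit_apply_ne_zero constantCoeff hε h2J hs1 hi0 k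

theorem linearUnit_ne_single [Nontrivial K] (g : P) (c : K) :
    linearUnit (ofUnit K pa) (ofUnit K pb) ≠ MonoidAlgebra.single g c := by
  obtain ⟨s, hs⟩ := exists_unit_eq_one_add_X K
  have pair := IsPromislowPair.of_rotation_reflection swapUnit_sq (semiconjBy_swapUnit s)
  refine pair.ne_single (torusMatrix_mem_units s) swapUnit_mem_units (fun k => ?_) g c
  rw [map_linearUnit, pair.map_algHom_ofUnit K, pair.map_algHom_ofUnit K,
    pair.lift_pa, pair.lift_pb]
  refine linearUnit_apply_ne_zero constantCoeff (Units.ext (by simp [hs])) (fun h => ?_) k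
  simpa [hs, coeff_X_pow] using congrArg (coeff 4) h

end PowerSeries

end Promislow

open Promislow in
theorem group_ring_has_nontrivial_unit_of_root_general (K : Type*) [CommRing K] [Nontrivial K]
    (i : K) (hi : i ^ 2 = -1) :
    ∃ u : (MonoidAlgebra K P)ˣ,
      ¬∃ (c : Kˣ) (g : P), (u : MonoidAlgebra K P) = MonoidAlgebra.single g (c : K) := by
  suffices ∃ u : MonoidAlgebra K P, IsUnit u ∧ ∀ g (c : K), u ≠ MonoidAlgebra.single g c by
    obtain ⟨_, ⟨u, rfl⟩, hu⟩ := this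
    exact ⟨u, fun ⟨c, g, h⟩ => hu g c h⟩
  by_cases h2 : IsNilpotent (2 : K)
  · have h2' : IsNilpotent (2 : MonoidAlgebra K P) := by
      simpa only [map_ofNat] using h2.map (algebraMap K (MonoidAlgebra K P))
    exact ⟨_, (IsPromislowPair.pa_pb.map (ofUnit K)).isUnit_linearUnit h2', linearUnit_ne_single⟩
  · obtain ⟨J, hJ, h2J⟩ : ∃ J : Ideal K, J.IsPrime ∧ (2 : K) ∉ J := by
      simpa [nilpotent_iff_mem_prime] using h2
    exact ⟨_, (IsPromislowPair.pa_pb.map (ofUnit K)).isUnit_pellUnit hi, pellUnit_ne_single hi h2J⟩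

/-- If `K` is a field containing an element `ζ` with `ζ⁴ = −1`, then the group ring
`K[P]` contains a unit that is not a trivial unit. -/
theorem group_ring_has_nontrivial_unit_of_root (K : Type*) [Field K] (ζ : K)
    (hζ : ζ ^ 4 = -1) :
    ∃ u : (MonoidAlgebra K P)ˣ,
      ¬∃ (c : Kˣ) (g : P), (u : MonoidAlgebra K P) = MonoidAlgebra.single g (c : K) :=
  group_ring_has_nontrivial_unit_of_root_general K (ζ ^ 2) (by rw [← hζ]; ring)
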